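/- Assume r ≥ 2 and let d be an integer with d > L+1. For a tuple (d_0,…,d_L) ∈ ℕ^{L+1} with d_0 + ⋯ + d_L = d, the following are equivalent: (i) d_l ≤ r·d_{l-1} and d_{l-1} ≤ r·d_l for every l ∈ {1,…,L}; (ii) there exists a finite-dimensional Λ-module M with rad(M) = (d_0,…,d_L) such that the pair (rad(M), socseq(M)) is a minimal element of rad-soc(d), i.e., every finite-dimensional Λ-module N with dim_K N = d, rad(N) ≼ rad(M) and socseq(N) ≼ socseq(M) satisfies rad(N) = rad(M) and socseq(N) = socseq(M). -/

import Mathlib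

noncomputable section

/-- The relation on the free algebra killing all products of `L+1` generators. -/
def TruncRel (K : Type*) [Field K] (r L : ℕ) :
    FreeAlgebra K (Fin r) → FreeAlgebra K (Fin r) → Prop := fun a b =>
  (∃ f : Fin (L + 1) → Fin r, a = (List.ofFn fun j => FreeAlgebra.ι K (f j)).prod) ∧ b = 0

/-- The local truncated path algebra with `r` loops and Loewy length `L+1`:
the quotient of `K⟨X_1,…,X_r⟩` by the two-sided ideal generated by all products
of `L+1` generators. -/
def TruncAlg (K : Type*) [Field K] (r L : ℕ) : Type _ := RingQuot (TruncRel K r L)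

instance (K : Type*) [Field K] (r L : ℕ) : Ring (TruncAlg K r L) :=
  inferInstanceAs (Ring (RingQuot _))

instance (K : Type*) [Field K] (r L : ℕ) : Algebra K (TruncAlg K r L) :=
  inferInstanceAs (Algebra K (RingQuot _))

/-- The images of the generators `X i` in the truncated algebra. -/
def gen (K : Type*) [Field K] (r L : ℕ) (i : Fin r) : TruncAlg K r L :=
  RingQuot.mkAlgHom K (TruncRel K r L) (FreeAlgebra.ι K i)

/-- The two-sided ideal `J` of `Λ` generated by the images of `X_1,…,X_r`,
realized as a `K`-submodule of `Λ`. -/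
def Jrad (K : Type*) [Field K] (r L : ℕ) : Submodule K (TruncAlg K r L) :=
  ⊤ * Submodule.span K (Set.range (gen K r L)) * ⊤

/-- `J^l M`, the submodule of `M` given by the action of `J^l`. -/
def jpow (K : Type*) [Field K] (r L : ℕ) (M : Type*) [AddCommGroup M] [Module K M]
    [Module (TruncAlg K r L) M] [IsScalarTower K (TruncAlg K r L) M] (l : ℕ) :
    Submodule (TruncAlg K r L) M :=
  Submodule.span (TruncAlg K r L)
    {x : M | ∃ a ∈ (Jrad K r L ^ l : Submodule K (TruncAlg K r L)), ∃ m : M, x = a • m}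

/-- The socle of a module: the supremum of all simple submodules. -/
def socle (R N : Type*) [Ring R] [AddCommGroup N] [Module R N] : Submodule R N :=
  sSup {p : Submodule R N | IsSimpleModule R ↥p}

/-- The socle series: `socSeries R M l` is `soc_{l-1} M`, so `socSeries R M 0 = soc_{-1} M = ⊥`
and `socSeries R M (l+1) = soc_l M` is the preimage in `M` of `soc (M / soc_{l-1} M)`. -/
def socSeries (R M : Type*) [Ring R] [AddCommGroup M] [Module R M] : ℕ → Submodule R M
  | 0 => ⊥
  | l + 1 => Submodule.comap (socSeries R M l).mkQ (socle R (M ⧸ socSeries R M l))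

/-- Dimension of the subquotient `q / (p ⊓ q)`; for `p ≤ q` this is `dim (q/p)`. -/
def quotDim (K M : Type*) [Field K] [AddCommGroup M] [Module K M]
    (p q : Submodule K M) : ℕ :=
  Module.finrank K (↥q ⧸ Submodule.comap q.subtype p)

/-- The radical layering `rad(M) = (dim_K J^l M / J^{l+1} M)_{l=0,…,L}`. -/
def radLayering (K : Type*) [Field K] (r L : ℕ) (M : Type*) [AddCommGroup M] [Module K M]
    [Module (TruncAlg K r L) M] [IsScalarTower K (TruncAlg K r L) M] : Fin (L + 1) → ℕ :=
  fun l => quotDim K M ((jpow K r L M ((l : ℕ) + 1)).restrictScalars K)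
    ((jpow K r L M (l : ℕ)).restrictScalars K)

/-- The socle layering `socseq(M) = (dim_K soc_l M / soc_{l-1} M)_{l=0,…,L}`. -/
def socLayering (K : Type*) [Field K] (r L : ℕ) (M : Type*) [AddCommGroup M] [Module K M]
    [Module (TruncAlg K r L) M] [IsScalarTower K (TruncAlg K r L) M] : Fin (L + 1) → ℕ :=
  fun l => quotDim K M ((socSeries (TruncAlg K r L) M (l : ℕ)).restrictScalars K)
    ((socSeries (TruncAlg K r L) M ((l : ℕ) + 1)).restrictScalars K)

/-- The dominance order on `ℕ^{L+1}`: `a ≼ b` iff all partial sums satisfy `≤`. -/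
def DomLE (L : ℕ) (a b : Fin (L + 1) → ℕ) : Prop :=
  ∀ l : Fin (L + 1), ∑ j ∈ Finset.Iic l, a j ≤ ∑ j ∈ Finset.Iic l, b j

/-- `reverse (a_0, …, a_L) = (a_L, …, a_0)`. -/
def revTuple (L : ℕ) (a : Fin (L + 1) → ℕ) : Fin (L + 1) → ℕ := fun l => a l.rev

/-!
Write `X_i` for the operators by which the generators act on `M`. The maps `P ↦ ∑ i, X_i P` and
`Q ↦ ⋂ i, X_i⁻¹ Q` on subspaces are adjoint; the first produces `J^l M` from `M`, the second
`soc_l M` from `0`. Adjointness gives `reverse (socseq M) ≼ rad M`, and since there are `r`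
operators neither layering can grow by more than a factor `r` per step.

Growth by at most `r` in both directions characterises the tuples `b` for which some module has
radical layering `b` and socle layering `reverse b`, and such a pair is minimal because
`reverse (socseq N) ≼ rad N` for every `N`. Conversely, the flattest tuple `b` with
`reverse (socseq M) ≼ b ≼ rad M` (a taut string) satisfies both growth conditions, so a minimal
pair must have `rad M = b`.
-/

section Dominance

variable {L : ℕ} {a b c : Fin (L + 1) → ℕ}

lemma Iio_fin_succ (l : Fin L) : Finset.Iio l.succ = Finset.Iic l.castSucc := by
  ext j
  simp only [Finset.mem_Iio, Finset.mem_Iic, Fin.le_castSucc_iff]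

lemma DomLE.sum_Iio_le (h : DomLE L a b) (k : Fin (L + 1)) :
    ∑ j ∈ Finset.Iio k, a j ≤ ∑ j ∈ Finset.Iio k, b j := by
  cases k using Fin.cases with
  | zero => simp [show Finset.Iio (0 : Fin (L + 1)) = ∅ from Finset.Iio_bot]
  | succ l => simpa only [Iio_fin_succ] using h l.castSucc

lemma DomLE.sum_le (h : DomLE L a b) : ∑ j, a j ≤ ∑ j, b j := by
  have htop : Finset.Iic (Fin.last L) = Finset.univ := Finset.Iic_top
  simpa only [htop] using h (Fin.last L)

lemma DomLE.refl (a : Fin (L + 1) → ℕ) : DomLE L a a := fun _ => le_rfl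

lemma DomLE.trans (hab : DomLE L a b) (hbc : DomLE L b c) : DomLE L a c :=
  fun l => (hab l).trans (hbc l)

lemma DomLE.antisymm (hab : DomLE L a b) (hba : DomLE L b a) : a = b := by
  funext l
  have hIic := (hab l).antisymm (hba l)
  have hIio := (hab.sum_Iio_le l).antisymm (hba.sum_Iio_le l)
  rw [← Finset.sum_Iio_add_eq_sum_Iic, ← Finset.sum_Iio_add_eq_sum_Iic, hIio] at hIic
  exact Nat.add_left_cancel hIic

lemma sum_revTuple (a : Fin (L + 1) → ℕ) : ∑ l, revTuple L a l = ∑ l, a l :=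
  Equiv.sum_comp Fin.revPerm a

lemma revTuple_revTuple (a : Fin (L + 1) → ℕ) : revTuple L (revTuple L a) = a :=
  funext fun l => congrArg a l.rev_rev

lemma sum_Iic_revTuple_add_sum_Iio (a : Fin (L + 1) → ℕ) (l : Fin (L + 1)) :
    ∑ j ∈ Finset.Iic l, revTuple L a j + ∑ j ∈ Finset.Iio l.rev, a j = ∑ j, a j := by
  have hmap : ∑ j ∈ Finset.Iic l, revTuple L a j = ∑ j ∈ Finset.Ici l.rev, a j := by
    rw [← Fin.map_revPerm_Iic, Finset.sum_map]; rfl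
  rw [hmap, add_comm, ← Finset.sum_union (Finset.disjoint_left.mpr fun j hlt hge =>
    (Finset.mem_Iio.mp hlt).not_ge (Finset.mem_Ici.mp hge))]
  congr 1
  ext j
  simpa using lt_or_ge j l.rev

lemma DomLE.rev (h : DomLE L a b) (hsum : ∑ l, a l = ∑ l, b l) :
    DomLE L (revTuple L b) (revTuple L a) := fun l => by
  have hrev := h.sum_Iio_le l.rev
  have ha := sum_Iic_revTuple_add_sum_Iio a l
  have hb := sum_Iic_revTuple_add_sum_Iio b l
  omega

lemma DomLE.le_revTuple (h : DomLE L a (revTuple L b)) (hsum : ∑ l, a l = ∑ l, b l) :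
    DomLE L b (revTuple L a) := by
  simpa only [revTuple_revTuple] using h.rev (hsum.trans (sum_revTuple b).symm)

lemma DomLE.revTuple_le (h : DomLE L (revTuple L a) b) (hsum : ∑ l, revTuple L a l = ∑ l, b l) :
    DomLE L (revTuple L b) a := by
  simpa only [revTuple_revTuple] using h.rev hsum

lemma DomLE.succ_le_of_sum_Iic_eq (h : DomLE L b a) {l : Fin L}
    (heq : ∑ j ∈ Finset.Iic l.castSucc, b j = ∑ j ∈ Finset.Iic l.castSucc, a j) :
    b l.succ ≤ a l.succ := by
  have hsucc := h l.succ
  rw [← Finset.sum_Iio_add_eq_sum_Iic, ← Finset.sum_Iio_add_eq_sum_Iic, Iio_fin_succ, heq] at hsucc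
  exact Nat.le_of_add_le_add_left hsucc

lemma DomLE.castSucc_le_of_sum_Iic_eq (h : DomLE L b a) {l : Fin L}
    (heq : ∑ j ∈ Finset.Iic l.castSucc, b j = ∑ j ∈ Finset.Iic l.castSucc, a j) :
    a l.castSucc ≤ b l.castSucc := by
  have hpred := h.sum_Iio_le l.castSucc
  rw [← Finset.sum_Iio_add_eq_sum_Iic, ← Finset.sum_Iio_add_eq_sum_Iic] at heq
  omega

end Dominance

section TautString

variable {L r : ℕ} {a b c : Fin (L + 1) → ℕ}

/-- The taut string between two tuples `c ≼ a`: the flattest tuple `b` with `c ≼ b ≼ a`, where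
flatness is measured by the sum of squares. -/
def IsTaut (c a b : Fin (L + 1) → ℕ) : Prop :=
  MinimalFor (fun b => DomLE L c b ∧ DomLE L b a) (fun b => ∑ l, b l ^ 2) b

lemma exists_isTaut (hca : DomLE L c a) : ∃ b, IsTaut c a b :=
  exists_minimalFor_of_wellFoundedLT _ _ ⟨a, hca, DomLE.refl a⟩

lemma sum_sq_add_single {ι : Type*} [Fintype ι] [DecidableEq ι] (x : ι → ℕ) (i : ι) :
    ∑ l, (x + Pi.single i 1 : ι → ℕ) l ^ 2 = ∑ l, x l ^ 2 + 2 * x i + 1 := by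
  have hterm : ∀ l, (x + Pi.single i 1 : ι → ℕ) l ^ 2 =
      x l ^ 2 + (Pi.single i (2 * x i + 1) : ι → ℕ) l := fun l => by
    obtain rfl | hl := eq_or_ne l i
    · simp only [Pi.add_apply, Pi.single_eq_same]; ring
    · simp only [Pi.add_apply, Pi.single_eq_of_ne hl, add_zero]
  simp_rw [hterm, Finset.sum_add_distrib, Finset.sum_pi_single', Finset.mem_univ, if_true]
  ring

lemma sum_Iic_add_single (x : Fin (L + 1) → ℕ) (i l : Fin (L + 1)) :
    ∑ j ∈ Finset.Iic l, (x + Pi.single i 1 : Fin (L + 1) → ℕ) j =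
      ∑ j ∈ Finset.Iic l, x j + if i ≤ l then 1 else 0 := by
  simp_rw [Pi.add_apply, Finset.sum_add_distrib, Finset.sum_pi_single', Finset.mem_Iic]

/-- Otherwise moving one unit from position `q` to position `p` would flatten `b`. -/
lemma IsTaut.exists_sum_Iic_eq (hb : IsTaut c a b) {p q : Fin (L + 1)} (hpq : p < q)
    (hjump : b p + 2 ≤ b q) : ∃ l : Fin L, p ≤ l.castSucc ∧ l.castSucc < q ∧
      ∑ j ∈ Finset.Iic l.castSucc, b j = ∑ j ∈ Finset.Iic l.castSucc, a j := by
  by_contra! hslack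
  obtain ⟨x, rfl⟩ : ∃ x, b = x + Pi.single q 1 :=
    ⟨b - Pi.single q 1, funext fun l => by
      obtain rfl | hl := eq_or_ne l q
      · simp only [Pi.add_apply, Pi.sub_apply, Pi.single_eq_same]; omega
      · simp [Pi.single_eq_of_ne hl]⟩
  have hflat : ∑ l, (x + Pi.single p 1 : Fin (L + 1) → ℕ) l ^ 2 <
      ∑ l, (x + Pi.single q 1 : Fin (L + 1) → ℕ) l ^ 2 := by
    simp only [Pi.add_apply, Pi.single_eq_same, Pi.single_eq_of_ne hpq.ne, add_zero] at hjump
    rw [sum_sq_add_single, sum_sq_add_single]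
    omega
  refine hflat.not_ge (hb.2 ⟨hb.prop.1.trans fun l => ?_, fun l => ?_⟩ hflat.le)
  · rw [sum_Iic_add_single, sum_Iic_add_single]
    split_ifs <;> omega
  · have hle := hb.prop.2 l
    rw [sum_Iic_add_single] at hle ⊢
    split_ifs at hle ⊢ with hp hq hq
    · exact hle
    · obtain ⟨k, rfl⟩ := Fin.exists_castSucc_eq.mpr
        (ne_of_lt ((not_le.mp hq).trans_le q.le_last))
      have hne := hslack k hp (not_le.mp hq)
      rw [sum_Iic_add_single, if_neg hq] at hne
      omega
    all_goals omega

lemma IsTaut.rev (hb : IsTaut c a b) (hca : ∑ l, c l = ∑ l, a l) :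
    IsTaut (revTuple L a) (revTuple L c) (revTuple L b) := by
  have hcb := hb.prop.1.sum_le
  have hba := hb.prop.2.sum_le
  have hsq : ∀ x : Fin (L + 1) → ℕ, ∑ l, revTuple L x l ^ 2 = ∑ l, x l ^ 2 :=
    fun x => sum_revTuple fun l => x l ^ 2
  refine ⟨⟨hb.prop.2.rev (by omega), hb.prop.1.rev (by omega)⟩, fun y ⟨hay, hyc⟩ hle => ?_⟩
  have hlower := hay.sum_le
  have hupper := hyc.sum_le
  rw [sum_revTuple] at hlower hupper
  have hcy : DomLE L c (revTuple L y) := hyc.le_revTuple (by omega)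
  have hya : DomLE L (revTuple L y) a := hay.revTuple_le (by rw [sum_revTuple]; omega)
  simp only [hsq] at hle ⊢
  simpa only [hsq] using hb.2 ⟨hcy, hya⟩ ((hsq y).trans_le hle)

/-- The partial sums of `a` and `b` agree at some position between `i` and `j`. At the first such
position `a` vanishes, hence so do the next entry of `a` and the next entry of `b`. -/
lemma IsTaut.exists_succ_eq_zero (hb : IsTaut c a b)
    (ha : ∀ l : Fin L, a l.succ ≤ r * a l.castSucc) {i j : Fin (L + 1)} (hij : i < j)
    (hi : b i = 0) (hj : 2 ≤ b j) :
    ∃ l : Fin L, i ≤ l.castSucc ∧ l.castSucc < j ∧ b l.succ = 0 := by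
  obtain ⟨l, ⟨hil, hlj, htight⟩, hmin⟩ := exists_minimal_of_wellFoundedLT
    (fun l : Fin L => i ≤ l.castSucc ∧ l.castSucc < j ∧
      ∑ k ∈ Finset.Iic l.castSucc, b k = ∑ k ∈ Finset.Iic l.castSucc, a k)
    (hb.exists_sum_Iic_eq hij (by omega))
  have hal : a l.castSucc = 0 := by
    have hab := hb.prop.2.castSucc_le_of_sum_Iic_eq htight
    obtain rfl | hil := hil.eq_or_lt
    · omega
    have hbl : b l.castSucc < 2 := by
      by_contra! hbl
      obtain ⟨k, hik, hkl, hk⟩ := hb.exists_sum_Iic_eq hil (by omega)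
      exact (hmin ⟨hik, hkl.trans hlj, hk⟩ hkl.le).not_gt hkl
    by_contra hpos
    obtain ⟨k, hk⟩ : ∃ k : Fin L, k.succ = l.castSucc :=
      Fin.exists_succ_eq.mpr (hil.trans_le' (Fin.zero_le i)).ne'
    have hkl : k.castSucc < l.castSucc := hk ▸ Fin.castSucc_lt_succ
    have hik : i ≤ k.castSucc := Fin.le_castSucc_iff.mpr (hk ▸ hil)
    have hslack : ∑ m ∈ Finset.Iic k.castSucc, b m ≠ ∑ m ∈ Finset.Iic k.castSucc, a m :=
      fun hk => (hmin ⟨hik, hkl.trans hlj, hk⟩ hkl.le).not_gt hkl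
    have hle := hb.prop.2 k.castSucc
    rw [← Finset.sum_Iio_add_eq_sum_Iic, ← Finset.sum_Iio_add_eq_sum_Iic, ← hk,
      Iio_fin_succ, hk] at htight
    omega
  have hgrowth := ha l
  rw [hal, mul_zero] at hgrowth
  exact ⟨l, hil, hlj, Nat.le_zero.mp ((hb.prop.2.succ_le_of_sum_Iic_eq htight).trans hgrowth)⟩

lemma IsTaut.lt_two_of_eq_zero (hb : IsTaut c a b)
    (ha : ∀ l : Fin L, a l.succ ≤ r * a l.castSucc) {i j : Fin (L + 1)} (hij : i < j)
    (hi : b i = 0) : b j < 2 := by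
  induction i using WellFoundedGT.induction with | ind i ih => ?_
  by_contra! hj
  obtain ⟨l, hil, hlj, hbl⟩ := hb.exists_succ_eq_zero ha hij hi hj
  have hlj : l.succ < j :=
    (Fin.castSucc_lt_iff_succ_le.mp hlj).lt_of_ne (by rintro rfl; omega)
  exact (ih l.succ (hil.trans_lt Fin.castSucc_lt_succ) hlj hbl).not_ge hj

lemma IsTaut.pos (hb : IsTaut c a b) (hca : ∑ l, c l = ∑ l, a l) (hlarge : L + 1 ≤ ∑ l, a l)
    (ha : ∀ l : Fin L, a l.succ ≤ r * a l.castSucc)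
    (hc : ∀ l : Fin L, c l.castSucc ≤ r * c l.succ) (l : Fin (L + 1)) : 0 < b l := by
  by_contra! hl
  replace hl : b l = 0 := Nat.le_zero.mp hl
  have hle_one : ∀ j, b j ≤ 1 := fun j => by
    obtain hjl | rfl | hlj := lt_trichotomy j l
    · have hrev := (hb.rev hca).lt_two_of_eq_zero (r := r) (i := l.rev) (j := j.rev)
        (fun k => by simpa only [revTuple, Fin.rev_succ, Fin.rev_castSucc] using hc k.rev)
        (Fin.rev_lt_rev.mpr hjl) (by rwa [revTuple, Fin.rev_rev])
      rw [revTuple, Fin.rev_rev] at hrev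
      exact Nat.le_of_lt_succ hrev
    · omega
    · exact Nat.le_of_lt_succ (hb.lt_two_of_eq_zero ha hlj hl)
  have hlt : ∑ j, b j < ∑ _j : Fin (L + 1), 1 :=
    Finset.sum_lt_sum (fun j _ => hle_one j) ⟨l, Finset.mem_univ l, by omega⟩
  have hcb := hb.prop.1.sum_le
  rw [Fin.sum_const, smul_eq_mul, mul_one] at hlt
  omega

lemma IsTaut.succ_le (hb : IsTaut c a b) (hr : 2 ≤ r)
    (ha : ∀ l : Fin L, a l.succ ≤ r * a l.castSucc) (hpos : ∀ l, 0 < b l) (l : Fin L) :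
    b l.succ ≤ r * b l.castSucc := by
  by_contra! hjump
  have hbl := hpos l.castSucc
  obtain ⟨k, hlk, hkl, htight⟩ := hb.exists_sum_Iic_eq (Fin.castSucc_lt_succ (i := l))
    (by nlinarith)
  obtain rfl : k = l := le_antisymm (Fin.castSucc_lt_succ_iff.mp hkl) hlk
  have hab := hb.prop.2.castSucc_le_of_sum_Iic_eq htight
  exact hjump.not_ge <| (hb.prop.2.succ_le_of_sum_Iic_eq htight).trans <|
    (ha k).trans (Nat.mul_le_mul_left r hab)

lemma exists_between_of_growth (hr : 2 ≤ r) (hca : DomLE L c a) (hsum : ∑ l, c l = ∑ l, a l)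
    (hlarge : L + 1 ≤ ∑ l, a l) (ha : ∀ l : Fin L, a l.succ ≤ r * a l.castSucc)
    (hc : ∀ l : Fin L, c l.castSucc ≤ r * c l.succ) :
    ∃ b, DomLE L c b ∧ DomLE L b a ∧
      ∀ l : Fin L, b l.succ ≤ r * b l.castSucc ∧ b l.castSucc ≤ r * b l.succ := by
  obtain ⟨b, hb⟩ := exists_isTaut hca
  have hpos := hb.pos hsum hlarge ha hc
  refine ⟨b, hb.prop.1, hb.prop.2, fun l => ⟨hb.succ_le hr ha hpos l, ?_⟩⟩
  simpa only [revTuple, Fin.rev_succ, Fin.rev_castSucc, Fin.rev_rev] using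
    (hb.rev hsum).succ_le hr
      (fun k => by simpa only [revTuple, Fin.rev_succ, Fin.rev_castSucc] using hc k.rev)
      (fun k => hpos k.rev) l.rev

end TautString

section CoordinateMaps

variable {K M ι : Type*} [Field K] [AddCommGroup M] [Module K M] {X : ι → M →ₗ[K] M}
  {P Q : Submodule K M}

/-- The sum of the images of `P` under the maps `X i`. For a module `M` over an algebra with
generators `X i` this is `J P`. -/
def sumMap (X : ι → M →ₗ[K] M) (P : Submodule K M) : Submodule K M :=
  ⨆ i, P.map (X i)

/-- The vectors that every map `X i` sends into `P`. For a submodule `P` of a module `M` over an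
algebra with generators `X i` this is the preimage in `M` of the annihilator of `J` in `M / P`. -/
def infComap (X : ι → M →ₗ[K] M) (P : Submodule K M) : Submodule K M :=
  ⨅ i, P.comap (X i)

lemma mem_infComap {v : M} : v ∈ infComap X P ↔ ∀ i, X i v ∈ P := by
  simp only [infComap, Submodule.mem_iInf, Submodule.mem_comap]

lemma apply_mem_sumMap {v : M} (hv : v ∈ P) (i : ι) : X i v ∈ sumMap X P :=
  Submodule.mem_iSup_of_mem i (Submodule.mem_map_of_mem hv)

lemma gc_sumMap_infComap (X : ι → M →ₗ[K] M) : GaloisConnection (sumMap X) (infComap X) :=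
  fun P Q => by
    simp only [sumMap, infComap, iSup_le_iff, le_iInf_iff, Submodule.map_le_iff_le_comap]

lemma antitone_sumMap_iterate (X : ι → M →ₗ[K] M) : Antitone fun l => (sumMap X)^[l] ⊤ :=
  (gc_sumMap_infComap X).monotone_l.antitone_iterate_of_map_le le_top

lemma monotone_infComap_iterate (X : ι → M →ₗ[K] M) : Monotone fun l => (infComap X)^[l] ⊥ :=
  (gc_sumMap_infComap X).monotone_u.monotone_iterate_of_le_map bot_le

lemma galoisConnection_iterate {α : Type*} [Preorder α] {l u : α → α} (gc : GaloisConnection l u)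
    (n : ℕ) : GaloisConnection l^[n] u^[n] := by
  induction n with
  | zero => exact GaloisConnection.id
  | succ n ih => exact Function.iterate_succ l n ▸ Function.iterate_succ' u n ▸ gc.compose ih

lemma sumMap_iterate_le_infComap_iterate {k l : ℕ} (h : (sumMap X)^[k + l] ⊤ = ⊥) :
    (sumMap X)^[l] ⊤ ≤ (infComap X)^[k] ⊥ :=
  (galoisConnection_iterate (gc_sumMap_infComap X) k).le_u
    (by rw [← Function.iterate_add_apply, h])

lemma sumMap_iterate_le_iff {n : ℕ} : (sumMap X)^[n] P ≤ Q ↔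
    ∀ f : Fin n → ι, P ≤ Q.comap (List.ofFn fun j => X (f j)).prod := by
  induction n generalizing Q with
  | zero => simp [Submodule.comap_id, Module.End.one_eq_id]
  | succ n ih =>
    rw [Function.iterate_succ_apply', gc_sumMap_infComap X, ih, Fin.forall_fin_succ_pi, forall_comm]
    simp only [infComap, Submodule.comap_iInf, le_iInf_iff, List.ofFn_succ, List.prod_cons,
      Fin.cons_zero, Fin.cons_succ, Module.End.mul_eq_comp, Submodule.comap_comp]

lemma quotDim_add [FiniteDimensional K M] (hPQ : P ≤ Q) :
    quotDim K M P Q + Module.finrank K P = Module.finrank K Q := by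
  rw [quotDim, ← (Submodule.comapSubtypeEquivOfLe hPQ).finrank_eq]
  exact Submodule.finrank_quotient_add_finrank _

lemma sum_Iic_quotDim_add_finrank [FiniteDimensional K M] {L : ℕ} {F : ℕ → Submodule K M}
    (hF : Antitone F) (l : Fin (L + 1)) :
    ∑ j ∈ Finset.Iic l, quotDim K M (F (j + 1)) (F j) + Module.finrank K (F (l + 1)) =
      Module.finrank K (F 0) := by
  induction l using Fin.induction with
  | zero =>
    rw [← bot_eq_zero (α := Fin (L + 1)), Finset.Iic_bot, Finset.sum_singleton]
    exact quotDim_add (hF (Nat.le_succ 0))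
  | succ l ih =>
    rw [← Finset.sum_Iio_add_eq_sum_Iic, Iio_fin_succ, add_assoc, quotDim_add (hF (Nat.le_succ _))]
    exact ih

variable [Fintype ι] [FiniteDimensional K M]

lemma quotDim_infComap_le (X : ι → M →ₗ[K] M) (P Q : Submodule K M) :
    quotDim K M (infComap X P) (infComap X Q) ≤ Fintype.card ι * quotDim K M P Q := by
  let restrictX (i : ι) : infComap X Q →ₗ[K] Q :=
    (X i).restrict fun _ hv => mem_infComap.mp hv i
  let φ : infComap X Q →ₗ[K] ι → Q ⧸ P.comap Q.subtype :=
    LinearMap.pi fun i => (P.comap Q.subtype).mkQ ∘ₗ restrictX i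
  have hker : (infComap X P).comap (infComap X Q).subtype = LinearMap.ker φ := by
    ext v
    simp [φ, restrictX, funext_iff, mem_infComap]
  have hinj := LinearMap.finrank_le_finrank_of_injective
    (LinearMap.ker_eq_bot.mp (Submodule.ker_liftQ_eq_bot' _ φ hker))
  rwa [Module.finrank_pi_fintype, Finset.sum_const, Finset.card_univ, smul_eq_mul] at hinj

lemma quotDim_sumMap_le (X : ι → M →ₗ[K] M) (P Q : Submodule K M) :
    quotDim K M (sumMap X P) (sumMap X Q) ≤ Fintype.card ι * quotDim K M P Q := by
  classical
  let restrictX (i : ι) : Q →ₗ[K] sumMap X Q :=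
    (X i).restrict fun _ hv => apply_mem_sumMap hv i
  let φ : (ι → Q ⧸ P.comap Q.subtype) →ₗ[K] sumMap X Q ⧸ (sumMap X P).comap (sumMap X Q).subtype :=
    LinearMap.lsum K _ K fun i =>
      Submodule.mapQ _ _ (restrictX i) fun _ hv => apply_mem_sumMap (P := P) hv i
  have hφ : Function.Surjective φ := fun w => by
    obtain ⟨⟨w, hw⟩, rfl⟩ := Submodule.mkQ_surjective _ w
    have hle : sumMap X Q ≤ ((LinearMap.range φ).comap (Submodule.mkQ _)).map
        (sumMap X Q).subtype := iSup_le fun i => Submodule.map_le_iff_le_comap.mpr fun v hv =>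
      ⟨restrictX i ⟨v, hv⟩, ⟨Pi.single i (Submodule.Quotient.mk ⟨v, hv⟩),
        LinearMap.lsum_piSingle K _ _ _ _ _⟩, rfl⟩
    obtain ⟨w', hw', hww'⟩ := hle hw
    obtain rfl : w' = ⟨w, hw⟩ := Subtype.ext hww'
    exact hw'
  have hsurj := LinearMap.finrank_le_finrank_of_surjective hφ
  rwa [Module.finrank_pi_fintype, Finset.sum_const, Finset.card_univ, smul_eq_mul] at hsurj

end CoordinateMaps

section GeneratedAlgebra

variable {K A M ι : Type*} [Field K] [Ring A] [Algebra K A] {x : ι → A}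
  [AddCommGroup M] [Module A M]

/-- The two-sided ideal of `A` generated by the elements `x i`, as a `K`-submodule. -/
def genIdeal (K : Type*) {A ι : Type*} [Field K] [Ring A] [Algebra K A] (x : ι → A) :
    Submodule K A :=
  ⊤ * Submodule.span K (Set.range x) * ⊤

/-- A simple submodule is killed by the `x i`: if `x i • v ≠ 0` generated it, some power of
`a * x i` would fix `v` and vanish. -/
lemma smul_eq_zero_of_isSimpleModule {n : ℕ} (hnil : genIdeal K x ^ n = ⊥) {p : Submodule A M}
    (hp : IsSimpleModule A p) {v : M} (hv : v ∈ p) (i : ι) : x i • v = 0 := by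
  by_contra hne
  have hy0 : (⟨x i • v, p.smul_mem _ hv⟩ : p) ≠ 0 := fun h => hne (congrArg Subtype.val h)
  obtain ⟨a, ha⟩ := IsSimpleModule.toSpanSingleton_surjective A hy0 ⟨v, hv⟩
  have hfix : (a * x i) • v = v := (mul_smul a (x i) v).trans (congrArg Subtype.val ha)
  have hmem : a * x i ∈ genIdeal K x := mul_one (a * x i) ▸ Submodule.mul_mem_mul
    (Submodule.mul_mem_mul Submodule.mem_top (Submodule.subset_span ⟨i, rfl⟩)) Submodule.mem_top
  have hpow : (a * x i) ^ n = 0 := by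
    simpa only [hnil, Submodule.mem_bot] using Submodule.pow_mem_pow _ hmem n
  have hv0 : v = 0 := by
    rw [← Function.iterate_fixed hfix n, smul_iterate_apply, hpow, zero_smul]
  exact hne (by rw [hv0, smul_zero])

variable [Module K M] [IsScalarTower K A M] {P : Submodule K M}

/-- The action of the elements `x i` of `A` on the `A`-module `M`, as `K`-linear maps. -/
def genMap (K M : Type*) {A ι : Type*} [Field K] [Ring A] [Algebra K A] [AddCommGroup M]
    [Module K M] [Module A M] [IsScalarTower K A M] (x : ι → A) (i : ι) : M →ₗ[K] M :=
  Algebra.lsmul K K M (x i)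

lemma smul_mem_of_sumMap_le (hx : Algebra.adjoin K (Set.range x) = ⊤)
    (hP : sumMap (genMap K M x) P ≤ P) (a : A) {v : M} (hv : v ∈ P) : a • v ∈ P := by
  have ha : a ∈ Algebra.adjoin K (Set.range x) := hx ▸ Algebra.mem_top
  induction ha using Algebra.adjoin_induction generalizing v with
  | mem a ha => obtain ⟨i, rfl⟩ := ha; exact hP (apply_mem_sumMap hv i)
  | algebraMap c => rw [algebraMap_smul]; exact P.smul_mem c hv
  | add a b _ _ ha hb => rw [add_smul]; exact P.add_mem (ha hv) (hb hv)
  | mul a b _ _ ha hb => rw [mul_smul]; exact ha (hb hv)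

lemma top_smul_of_sumMap_le (hx : Algebra.adjoin K (Set.range x) = ⊤)
    (hP : sumMap (genMap K M x) P ≤ P) : (⊤ : Submodule K A) • P = P :=
  le_antisymm (Submodule.smul_le.mpr fun a _ _ hv => smul_mem_of_sumMap_le hx hP a hv)
    fun v hv => one_smul A v ▸ Submodule.smul_mem_smul Submodule.mem_top hv

lemma span_range_smul (x : ι → A) (P : Submodule K M) :
    Submodule.span K (Set.range x) • P = sumMap (genMap K M x) P := by
  refine le_antisymm (Submodule.smul_le.mpr fun a ha v hv => ?_) <| iSup_le fun i =>
    Submodule.map_le_iff_le_comap.mpr fun v hv =>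
      Submodule.smul_mem_smul (Submodule.subset_span ⟨i, rfl⟩) hv
  induction ha using Submodule.span_induction with
  | mem a ha => obtain ⟨i, rfl⟩ := ha; exact apply_mem_sumMap hv i
  | zero => rw [zero_smul]; exact Submodule.zero_mem _
  | add a b _ _ ha hb => rw [add_smul]; exact Submodule.add_mem _ ha hb
  | smul c a _ ha => rw [smul_assoc]; exact Submodule.smul_mem _ c ha

lemma genIdeal_smul (hx : Algebra.adjoin K (Set.range x) = ⊤)
    (hP : sumMap (genMap K M x) P ≤ P) : genIdeal K x • P = sumMap (genMap K M x) P := by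
  have hstable := (gc_sumMap_infComap (genMap K M x)).monotone_l hP
  calc genIdeal K x • P
      = (⊤ : Submodule K A) • Submodule.span K (Set.range x) • (⊤ : Submodule K A) • P :=
        (Submodule.smul_assoc _ _ _).trans (Submodule.smul_assoc _ _ _)
    _ = sumMap (genMap K M x) P := by
        rw [top_smul_of_sumMap_le hx hP, span_range_smul, top_smul_of_sumMap_le hx hstable]

lemma genIdeal_pow_smul_top (hx : Algebra.adjoin K (Set.range x) = ⊤) (l : ℕ) :
    genIdeal K x ^ l • (⊤ : Submodule K M) = (sumMap (genMap K M x))^[l] ⊤ := by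
  induction l with
  | zero => rw [pow_zero, Submodule.one_smul, Function.iterate_zero_apply]
  | succ l ih =>
    have hstable := antitone_sumMap_iterate (genMap K M x) l.le_succ
    simp only [Function.iterate_succ_apply'] at hstable
    calc genIdeal K x ^ (l + 1) • (⊤ : Submodule K M)
        = genIdeal K x • genIdeal K x ^ l • (⊤ : Submodule K M) :=
          pow_succ' (genIdeal K x) l ▸ Submodule.smul_assoc _ _ _
      _ = (sumMap (genMap K M x))^[l + 1] ⊤ := by
          rw [ih, genIdeal_smul hx hstable, Function.iterate_succ_apply']

lemma restrictScalars_span_singleton {v : M} (hx : Algebra.adjoin K (Set.range x) = ⊤)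
    (hv : ∀ i, x i • v = 0) : (Submodule.span A {v}).restrictScalars K = Submodule.span K {v} := by
  refine le_antisymm (fun w hw => ?_) (Submodule.span_le_restrictScalars K A {v})
  obtain ⟨a, rfl⟩ := Submodule.mem_span_singleton.mp hw
  have hstable : sumMap (genMap K M x) (Submodule.span K {v}) ≤ Submodule.span K {v} := by
    rw [gc_sumMap_infComap, Submodule.span_singleton_le_iff_mem, mem_infComap]
    exact fun i => (congrArg (· ∈ Submodule.span K {v}) (hv i)).mpr (Submodule.zero_mem _)
  exact smul_mem_of_sumMap_le hx hstable a (Submodule.mem_span_singleton_self v)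

lemma isSimpleModule_span_singleton {v : M} (hx : Algebra.adjoin K (Set.range x) = ⊤)
    (hv : ∀ i, x i • v = 0) (hv0 : v ≠ 0) : IsSimpleModule A (Submodule.span A {v}) := by
  have hatom := nonzero_span_atom (K := K) v hv0
  rw [← restrictScalars_span_singleton hx hv] at hatom
  exact isSimpleModule_iff_isAtom.mpr <|
    OrderEmbedding.isAtom_of_map_bot_of_image (Submodule.restrictScalarsEmbedding K A M) rfl hatom

lemma mem_socle_iff {n : ℕ} (hx : Algebra.adjoin K (Set.range x) = ⊤)
    (hnil : genIdeal K x ^ n = ⊥) {v : M} : v ∈ socle A M ↔ ∀ i, x i • v = 0 := by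
  refine ⟨fun hv => ?_, fun hv => ?_⟩
  · have hle : (socle A M).restrictScalars K ≤ infComap (genMap K M x) ⊥ := by
      rw [socle, Submodule.restrictScalars_sSup, sSup_image]
      exact iSup₂_le fun p hp v hv => mem_infComap.mpr (smul_eq_zero_of_isSimpleModule hnil hp hv)
    exact mem_infComap.mp (hle hv)
  · obtain rfl | hv0 := eq_or_ne v 0
    · exact Submodule.zero_mem _
    · have hle : Submodule.span A {v} ≤ socle A M :=
        le_sSup (isSimpleModule_span_singleton hx hv hv0)
      exact hle (Submodule.mem_span_singleton_self v)

lemma socSeries_restrictScalars {n : ℕ} (hx : Algebra.adjoin K (Set.range x) = ⊤)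
    (hnil : genIdeal K x ^ n = ⊥) (l : ℕ) :
    (socSeries A M l).restrictScalars K = (infComap (genMap K M x))^[l] ⊥ := by
  induction l with
  | zero => rfl
  | succ l ih =>
    ext v
    rw [Function.iterate_succ_apply', ← ih, mem_infComap, socSeries,
      Submodule.restrictScalars_mem, Submodule.mem_comap, mem_socle_iff hx hnil]
    exact forall_congr' fun i => Submodule.Quotient.mk_eq_zero _

end GeneratedAlgebra

section TruncAlg

variable {K M : Type*} [Field K] {r L : ℕ} [AddCommGroup M] [Module K M]
  [Module (TruncAlg K r L) M] [IsScalarTower K (TruncAlg K r L) M]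

lemma adjoin_range_gen (K : Type*) [Field K] (r L : ℕ) :
    Algebra.adjoin K (Set.range (gen K r L)) = ⊤ := by
  have hmap := congrArg (Subalgebra.map (RingQuot.mkAlgHom K (TruncRel K r L)))
    (FreeAlgebra.adjoin_range_ι K (Fin r))
  rwa [AlgHom.map_adjoin, ← Set.range_comp, Algebra.map_top,
    (AlgHom.range_eq_top _).mpr (RingQuot.mkAlgHom_surjective K _)] at hmap

lemma prod_ofFn_gen_eq_zero (f : Fin (L + 1) → Fin r) :
    (List.ofFn fun j => gen K r L (f j)).prod = 0 := by
  have hrel := RingQuot.mkAlgHom_rel K (s := TruncRel K r L) ⟨⟨f, rfl⟩, rfl⟩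
  rwa [map_zero, map_list_prod, List.map_ofFn] at hrel

lemma sumMap_gen_iterate_top (K : Type*) {M : Type*} [Field K] (r L : ℕ) [AddCommGroup M]
    [Module K M] [Module (TruncAlg K r L) M] [IsScalarTower K (TruncAlg K r L) M] :
    (sumMap (genMap K M (gen K r L)))^[L + 1] ⊤ = ⊥ := by
  rw [← le_bot_iff, sumMap_iterate_le_iff]
  intro f v _
  have hword : (List.ofFn fun j => genMap K M (gen K r L) (f j)).prod =
      Algebra.lsmul K K M (List.ofFn fun j => gen K r L (f j)).prod := by
    rw [map_list_prod, List.map_ofFn]; rfl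
  rw [Submodule.mem_comap, hword, prod_ofFn_gen_eq_zero, map_zero]
  exact Submodule.zero_mem _

lemma genIdeal_gen_pow (K : Type*) [Field K] (r L : ℕ) :
    genIdeal K (gen K r L) ^ (L + 1) = ⊥ := by
  have htop : genIdeal K (gen K r L) ^ (L + 1) • (⊤ : Submodule K (TruncAlg K r L)) = ⊥ :=
    (genIdeal_pow_smul_top (adjoin_range_gen K r L) _).trans (sumMap_gen_iterate_top K r L)
  exact le_bot_iff.mp fun a ha =>
    htop.le (mul_one a ▸ Submodule.smul_mem_smul ha Submodule.mem_top)

lemma jpow_restrictScalars (l : ℕ) : (jpow K r L M l).restrictScalars K =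
    (sumMap (genMap K M (gen K r L)))^[l] ⊤ := by
  have hx := adjoin_range_gen K r L
  have hstable := antitone_sumMap_iterate (genMap K M (gen K r L)) l.le_succ
  simp only [Function.iterate_succ_apply'] at hstable
  refine le_antisymm (fun v hv => ?_) ?_
  · induction hv using Submodule.span_induction with
    | mem v hv =>
      obtain ⟨a, ha, m, rfl⟩ := hv
      exact (genIdeal_pow_smul_top hx l).le (Submodule.smul_mem_smul ha Submodule.mem_top)
    | zero => exact Submodule.zero_mem _
    | add v w _ _ hv hw => exact Submodule.add_mem _ hv hw
    | smul a v _ hv => exact smul_mem_of_sumMap_le hx hstable a hv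
  · rw [← genIdeal_pow_smul_top hx l]
    exact Submodule.smul_le.mpr fun a ha m _ => Submodule.subset_span ⟨a, ha, m, rfl⟩

lemma radLayering_eq (l : Fin (L + 1)) : radLayering K r L M l =
    quotDim K M ((sumMap (genMap K M (gen K r L)))^[(l : ℕ) + 1] ⊤)
      ((sumMap (genMap K M (gen K r L)))^[(l : ℕ)] ⊤) := by
  simp only [radLayering, jpow_restrictScalars]

lemma socLayering_eq (l : Fin (L + 1)) : socLayering K r L M l =
    quotDim K M ((infComap (genMap K M (gen K r L)))^[(l : ℕ)] ⊥)
      ((infComap (genMap K M (gen K r L)))^[(l : ℕ) + 1] ⊥) := by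
  simp only [socLayering,
    socSeries_restrictScalars (adjoin_range_gen K r L) (genIdeal_gen_pow K r L)]

variable [FiniteDimensional K M]

lemma radLayering_succ_le (l : Fin L) :
    radLayering K r L M l.succ ≤ r * radLayering K r L M l.castSucc := by
  simp only [radLayering_eq, Fin.val_succ, Fin.val_castSucc]
  have h := quotDim_sumMap_le (genMap K M (gen K r L))
    ((sumMap (genMap K M (gen K r L)))^[(l : ℕ) + 1] ⊤)
    ((sumMap (genMap K M (gen K r L)))^[(l : ℕ)] ⊤)
  simpa only [Function.iterate_succ_apply', Fintype.card_fin] using h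

lemma socLayering_succ_le (l : Fin L) :
    socLayering K r L M l.succ ≤ r * socLayering K r L M l.castSucc := by
  simp only [socLayering_eq, Fin.val_succ, Fin.val_castSucc]
  have h := quotDim_infComap_le (genMap K M (gen K r L))
    ((infComap (genMap K M (gen K r L)))^[(l : ℕ)] ⊥)
    ((infComap (genMap K M (gen K r L)))^[(l : ℕ) + 1] ⊥)
  simpa only [Function.iterate_succ_apply', Fintype.card_fin] using h

lemma sum_Iic_radLayering_add_finrank (l : Fin (L + 1)) :
    ∑ j ∈ Finset.Iic l, radLayering K r L M j +
      Module.finrank K ((sumMap (genMap K M (gen K r L)))^[(l : ℕ) + 1] (⊤ : Submodule K M)) =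
      Module.finrank K M := by
  simp only [radLayering_eq]
  rw [sum_Iic_quotDim_add_finrank (antitone_sumMap_iterate _), Function.iterate_zero_apply,
    finrank_top]

lemma sum_Iic_revTuple_socLayering_add_finrank (l : Fin (L + 1)) :
    ∑ j ∈ Finset.Iic l, revTuple L (socLayering K r L M) j +
      Module.finrank K ((infComap (genMap K M (gen K r L)))^[L - l] (⊥ : Submodule K M)) =
      Module.finrank K M := by
  have hanti : Antitone fun j => (infComap (genMap K M (gen K r L)))^[L + 1 - j] ⊥ :=
    (monotone_infComap_iterate _).comp_antitone antitone_const_tsub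
  have hsum := sum_Iic_quotDim_add_finrank hanti l
  have htop : (infComap (genMap K M (gen K r L)))^[L + 1] ⊥ = ⊤ :=
    top_le_iff.mp (sumMap_iterate_le_infComap_iterate (l := 0) (sumMap_gen_iterate_top K r L))
  have hindex : ∀ j : Fin (L + 1), L + 1 - (j : ℕ) = L - j + 1 := fun j => by omega
  rw [Nat.sub_zero, htop, finrank_top, Nat.add_sub_add_right] at hsum
  simpa only [revTuple, socLayering_eq, Fin.val_rev, Nat.add_sub_add_right, hindex] using hsum

lemma domLE_revTuple_socLayering_radLayering :
    DomLE L (revTuple L (socLayering K r L M)) (radLayering K r L M) := fun l => by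
  have hle : (sumMap (genMap K M (gen K r L)))^[(l : ℕ) + 1] ⊤ ≤
      (infComap (genMap K M (gen K r L)))^[L - l] ⊥ := by
    refine sumMap_iterate_le_infComap_iterate ?_
    rw [show L - (l : ℕ) + (l + 1) = L + 1 by omega, sumMap_gen_iterate_top]
  have hfinrank := Submodule.finrank_mono hle
  have hrad := sum_Iic_radLayering_add_finrank (K := K) (M := M) (r := r) l
  have hsoc := sum_Iic_revTuple_socLayering_add_finrank (K := K) (M := M) (r := r) l
  omega

lemma sum_radLayering : ∑ l, radLayering K r L M l = Module.finrank K M := by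
  have h := sum_Iic_radLayering_add_finrank (K := K) (M := M) (r := r) (Fin.last L)
  rwa [Fin.val_last, sumMap_gen_iterate_top, finrank_bot, add_zero, ← Fin.top_eq_last,
    Finset.Iic_top] at h

lemma sum_socLayering : ∑ l, socLayering K r L M l = Module.finrank K M := by
  have h := sum_Iic_revTuple_socLayering_add_finrank (K := K) (M := M) (r := r) (Fin.last L)
  rwa [Fin.val_last, Nat.sub_self, Function.iterate_zero_apply, finrank_bot, add_zero,
    ← Fin.top_eq_last, Finset.Iic_top, sum_revTuple] at h

lemma layerings_eq_of_domLE {b : Fin (L + 1) → ℕ} (hsum : ∑ l, b l = Module.finrank K M)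
    (hrad : DomLE L (radLayering K r L M) b) (hsoc : DomLE L (socLayering K r L M) (revTuple L b)) :
    radLayering K r L M = b ∧ socLayering K r L M = revTuple L b := by
  have hmid := domLE_revTuple_socLayering_radLayering (K := K) (M := M) (r := r) (L := L)
  have hbsoc := hsoc.le_revTuple (sum_socLayering.trans hsum.symm)
  exact ⟨hrad.antisymm (hbsoc.trans hmid),
    by rw [hbsoc.antisymm (hmid.trans hrad), revTuple_revTuple]⟩

lemma exists_growth_domLE_layerings (hr : 2 ≤ r) (hlarge : L + 1 ≤ Module.finrank K M) :
    ∃ b : Fin (L + 1) → ℕ,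
      (∀ l : Fin L, b l.succ ≤ r * b l.castSucc ∧ b l.castSucc ≤ r * b l.succ) ∧
        ∑ l, b l = Module.finrank K M ∧ DomLE L b (radLayering K r L M) ∧
          DomLE L (revTuple L b) (socLayering K r L M) := by
  have hsum : ∑ l, revTuple L (socLayering K r L M) l = ∑ l, radLayering K r L M l := by
    rw [sum_revTuple, sum_socLayering, sum_radLayering]
  have hgrowth : ∀ l : Fin L, revTuple L (socLayering K r L M) l.castSucc ≤
      r * revTuple L (socLayering K r L M) l.succ := fun l => by
    simpa only [revTuple, Fin.rev_succ, Fin.rev_castSucc] using socLayering_succ_le l.rev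
  obtain ⟨b, hsocb, hbrad, hb⟩ := exists_between_of_growth hr
    domLE_revTuple_socLayering_radLayering hsum (hlarge.trans_eq sum_radLayering.symm)
    radLayering_succ_le hgrowth
  have hsumb := hbrad.sum_le.antisymm (hsum ▸ hsocb.sum_le)
  exact ⟨b, hb, hsumb.trans sum_radLayering, hbrad, hsocb.revTuple_le (hsum.trans hsumb.symm)⟩

end TruncAlg

section LayeredQuiver

variable {K B ι : Type*} [Field K] {L : ℕ} {deg : B → ℕ} {A : ι → B → B → Prop}

/-- A quiver with vertices `B` in degrees `0, …, L` and arrows of colours `ι`, each raising the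
degree by one, in which an arrow is determined by its colour and either endpoint and only the
vertices of degree `L` (resp. `0`) are sinks (resp. sources). It is the diagram of a module whose
radical and socle filtrations are both given by the degree. -/
structure IsLayeredQuiver (L : ℕ) (deg : B → ℕ) (A : ι → B → B → Prop) : Prop where
  deg_le : ∀ x, deg x ≤ L
  deg_add_one : ∀ {i x y}, A i x y → deg x + 1 = deg y
  left_unique : ∀ {i x x' y}, A i x y → A i x' y → x = x'
  right_unique : ∀ {i x y y'}, A i x y → A i x y' → y = y'
  exists_out : ∀ {x}, deg x < L → ∃ i y, A i x y
  exists_in : ∀ {y}, 0 < deg y → ∃ i x, A i x y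

/-- The functions on the vertices of `B` that vanish in degrees below `m`. -/
def degGE (K : Type*) [Field K] (deg : B → ℕ) (m : ℕ) : Submodule K (B → K) :=
  Submodule.pi {x | deg x < m} fun _ => ⊥

lemma mem_degGE {m : ℕ} {v : B → K} : v ∈ degGE K deg m ↔ ∀ x, deg x < m → v x = 0 := Iff.rfl

lemma IsLayeredQuiver.degGE_eq_bot (hA : IsLayeredQuiver L deg A) :
    degGE K deg (L + 1) = ⊥ :=
  le_bot_iff.mp fun _ hv => funext fun x => hv x (Nat.lt_succ_of_le (hA.deg_le x))

lemma quotDim_degGE [Finite B] (K : Type*) [Field K] (deg : B → ℕ) (m : ℕ) :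
    quotDim K (B → K) (degGE K deg (m + 1)) (degGE K deg m) = Nat.card {x // deg x = m} := by
  let φ : degGE K deg m →ₗ[K] {x // deg x = m} → K :=
    LinearMap.funLeft K K Subtype.val ∘ₗ (degGE K deg m).subtype
  have hφ : Function.Surjective φ := fun g => by
    classical
    refine ⟨⟨fun x => if hx : deg x = m then g ⟨x, hx⟩ else 0,
      mem_degGE.mpr fun x hx => dif_neg hx.ne⟩, ?_⟩
    funext x
    exact dif_pos x.2
  have hker : (degGE K deg (m + 1)).comap (degGE K deg m).subtype = LinearMap.ker φ := by
    ext v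
    simp only [Submodule.mem_comap, Submodule.subtype_apply, mem_degGE, LinearMap.mem_ker]
    refine ⟨fun hv => funext fun x => hv x (x.2.trans_lt m.lt_succ_self), fun hv x hx => ?_⟩
    obtain hx | hx := (Nat.le_of_lt_succ hx).lt_or_eq
    · exact v.2 x hx
    · exact congrFun hv ⟨x, hx⟩
  have := Fintype.ofFinite {x // deg x = m}
  rw [quotDim, hker, (φ.quotKerEquivOfSurjective hφ).finrank_eq, Module.finrank_fintype_fun_eq_card,
    Nat.card_eq_fintype_card]

variable [Fintype B]

open Classical in
/-- The linear map on `B → K` sending the basis vector at `x` to the sum of the basis vectors at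
the targets of the arrows of colour `i` starting at `x`. -/
def arrowMap (K : Type*) [Field K] (A : ι → B → B → Prop) (i : ι) : (B → K) →ₗ[K] (B → K) :=
  LinearMap.pi fun y => ∑ x with A i x y, LinearMap.proj x

lemma IsLayeredQuiver.arrowMap_apply (hA : IsLayeredQuiver L deg A) {i : ι} {x y : B}
    (h : A i x y) (v : B → K) : arrowMap K A i v y = v x := by
  classical
  have hfilter : (Finset.univ.filter fun x => A i x y) = {x} := by
    ext x'
    simpa using ⟨fun h' => hA.left_unique h' h, fun h' => h' ▸ h⟩
  simp [arrowMap, hfilter]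

lemma arrowMap_apply_eq_zero {i : ι} {y : B} {v : B → K} (h : ∀ x, A i x y → v x = 0) :
    arrowMap K A i v y = 0 := by
  classical
  simp only [arrowMap, LinearMap.pi_apply, LinearMap.sum_apply, LinearMap.proj_apply]
  exact Finset.sum_eq_zero fun x hx => h x (Finset.mem_filter.mp hx).2

lemma IsLayeredQuiver.arrowMap_single [DecidableEq B] (hA : IsLayeredQuiver L deg A) {i : ι}
    {x y : B} (h : A i x y) (c : K) : arrowMap K A i (Pi.single x c) = Pi.single y c := by
  funext y'
  obtain rfl | hy := eq_or_ne y' y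
  · rw [hA.arrowMap_apply h, Pi.single_eq_same, Pi.single_eq_same]
  · rw [Pi.single_eq_of_ne hy]
    refine arrowMap_apply_eq_zero fun x' hx' => ?_
    refine Pi.single_eq_of_ne ?_ _
    rintro rfl
    exact hy (hA.right_unique hx' h)

lemma IsLayeredQuiver.sumMap_degGE (hA : IsLayeredQuiver L deg A) (m : ℕ) :
    sumMap (arrowMap K A) (degGE K deg m) = degGE K deg (m + 1) := by
  classical
  refine le_antisymm ((gc_sumMap_infComap _).l_le fun v hv => mem_infComap.mpr fun i =>
    mem_degGE.mpr fun y hy => arrowMap_apply_eq_zero fun x hxy => mem_degGE.mp hv x ?_)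
    fun w hw => ?_
  · have hdeg := hA.deg_add_one hxy
    omega
  rw [← Finset.univ_sum_single w]
  refine Submodule.sum_mem _ fun y _ => ?_
  obtain hy | hy := lt_or_ge (deg y) (m + 1)
  · rw [mem_degGE.mp hw y hy, Pi.single_zero]
    exact Submodule.zero_mem _
  · obtain ⟨i, x, hxy⟩ := hA.exists_in (Nat.zero_lt_of_lt hy)
    rw [← hA.arrowMap_single hxy]
    refine apply_mem_sumMap (mem_degGE.mpr fun x' hx' => Pi.single_eq_of_ne ?_ _) i
    rintro rfl
    have hdeg := hA.deg_add_one hxy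
    omega

lemma IsLayeredQuiver.infComap_degGE (hA : IsLayeredQuiver L deg A) {m : ℕ} (hm : m ≤ L) :
    infComap (arrowMap K A) (degGE K deg (m + 1)) = degGE K deg m := by
  refine le_antisymm (fun v hv => mem_degGE.mpr fun x hx => ?_)
    ((gc_sumMap_infComap _).le_u (hA.sumMap_degGE m).le)
  obtain ⟨i, y, hxy⟩ := hA.exists_out (hx.trans_le hm)
  have hdeg := hA.deg_add_one hxy
  have hvy := mem_degGE.mp (mem_infComap.mp hv i) y (by omega)
  rwa [hA.arrowMap_apply hxy] at hvy

lemma IsLayeredQuiver.sumMap_iterate_top (hA : IsLayeredQuiver L deg A) (m : ℕ) :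
    (sumMap (arrowMap K A))^[m] ⊤ = degGE K deg m := by
  induction m with
  | zero => exact (eq_top_iff.mpr fun v _ => mem_degGE.mpr fun x hx => absurd hx (by omega)).symm
  | succ m ih => rw [Function.iterate_succ_apply', ih, hA.sumMap_degGE]

lemma IsLayeredQuiver.infComap_iterate_bot (hA : IsLayeredQuiver L deg A) {m : ℕ}
    (hm : m ≤ L + 1) : (infComap (arrowMap K A))^[m] ⊥ = degGE K deg (L + 1 - m) := by
  induction m with
  | zero => exact hA.degGE_eq_bot.symm
  | succ m ih =>
    rw [Function.iterate_succ_apply', ih (by omega),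
      show L + 1 - m = L + 1 - (m + 1) + 1 by omega, hA.infComap_degGE (by omega)]

end LayeredQuiver

universe u

section Realization

variable {K : Type*} [Field K] {r L : ℕ}

lemma exists_module_genMap_eq {V : Type*} [AddCommGroup V] [Module K V] {X : Fin r → V →ₗ[K] V}
    (hX : (sumMap X)^[L + 1] ⊤ = ⊥) : ∃ (_ : Module (TruncAlg K r L) V)
      (_ : IsScalarTower K (TruncAlg K r L) V), genMap K V (gen K r L) = X := by
  have hrel : ∀ ⦃a b⦄, TruncRel K r L a b →
      FreeAlgebra.lift K (A := Module.End K V) X a = FreeAlgebra.lift K X b := by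
    rintro _ _ ⟨⟨f, rfl⟩, rfl⟩
    have hword := sumMap_iterate_le_iff.mp hX.le f
    rw [map_zero, map_list_prod, List.map_ofFn]
    simpa [Submodule.comap_bot, LinearMap.ker_eq_top, Function.comp_def] using hword
  let Φ : TruncAlg K r L →ₐ[K] Module.End K V := RingQuot.liftAlgHom K ⟨FreeAlgebra.lift K X, hrel⟩
  let _ : Module (TruncAlg K r L) V := Module.compHom V Φ.toRingHom
  refine ⟨inferInstance, ⟨fun c a v => ?_⟩, ?_⟩
  · exact LinearMap.congr_fun (map_smul Φ c a) v
  · funext i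
    refine LinearMap.ext fun v => LinearMap.congr_fun (?_ : Φ (gen K r L i) = X i) v
    exact (RingQuot.liftAlgHom_mkAlgHom_apply K _ _ _).trans (FreeAlgebra.lift_ι_apply X i)

lemma IsLayeredQuiver.exists_module {B : Type*} [Finite B] {deg : B → ℕ}
    {A : Fin r → B → B → Prop} (hA : IsLayeredQuiver L deg A) (K : Type*) [Field K] :
    ∃ (_ : Module (TruncAlg K r L) (B → K)) (_ : IsScalarTower K (TruncAlg K r L) (B → K)),
      (∀ l, radLayering K r L (B → K) l = Nat.card {x // deg x = l}) ∧
        ∀ l, socLayering K r L (B → K) l = Nat.card {x // deg x = l.rev} := by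
  have := Fintype.ofFinite B
  obtain ⟨hmodule, htower, hgen⟩ := exists_module_genMap_eq
    ((hA.sumMap_iterate_top (K := K) (L + 1)).trans hA.degGE_eq_bot)
  refine ⟨hmodule, htower, fun l => ?_, fun l => ?_⟩
  · rw [radLayering_eq, hgen, hA.sumMap_iterate_top, hA.sumMap_iterate_top, quotDim_degGE]
  · rw [socLayering_eq, hgen, hA.infComap_iterate_bot (by omega),
      hA.infComap_iterate_bot (by omega), ← quotDim_degGE K, Fin.val_rev,
      show L + 1 - (l : ℕ) = L + 1 - (l + 1) + 1 by omega]

/-- Arrows of colour `i` between levels with `a` and `b` vertices. If `a ≤ b` the target set is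
cut into blocks of length `a` and the arrows of colour `i` go onto the `i`-th block in order; if
`b ≤ a` the same is done with the roles of source and target exchanged. -/
def LevelArrow (a b i j k : ℕ) : Prop := k = i * a + j ∨ j = i * b + k

lemma LevelArrow.symm {a b i j k : ℕ} (h : LevelArrow a b i j k) : LevelArrow b a i k j :=
  Or.symm h

lemma LevelArrow.right_unique {a b i j k k' : ℕ} (hj : j < a) (hk : k < b) (hk' : k' < b)
    (h : LevelArrow a b i j k) (h' : LevelArrow a b i j k') : k = k' := by
  obtain rfl | i := i
  · simp only [LevelArrow, zero_mul, zero_add] at h h'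
    omega
  · simp only [LevelArrow, add_mul, one_mul] at h h'
    omega

lemma exists_levelArrow {r a b j : ℕ} (hab : a ≤ r * b) (hj : j < a) :
    ∃ i < r, ∃ k < b, LevelArrow a b i j k := by
  have hb : 0 < b := Nat.pos_of_ne_zero fun hb => by simp [hb] at hab; omega
  exact ⟨j / b, Nat.div_lt_of_lt_mul (by rw [mul_comm]; exact hj.trans_le hab), j % b,
    Nat.mod_lt j hb, Or.inr (by rw [mul_comm, Nat.div_add_mod])⟩

lemma isLayeredQuiver_levels {b : Fin (L + 1) → ℕ}
    (hb : ∀ l : Fin L, b l.succ ≤ r * b l.castSucc ∧ b l.castSucc ≤ r * b l.succ) :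
    IsLayeredQuiver L (fun x : Σ l, Fin (b l) => (x.1 : ℕ)) fun (i : Fin r) x y =>
      (x.1 : ℕ) + 1 = y.1 ∧ LevelArrow (b x.1) (b y.1) i x.2 y.2 where
  deg_le x := Nat.le_of_lt_succ x.1.isLt
  deg_add_one h := h.1
  left_unique {i x x' y} h h' := by
    obtain ⟨l, j⟩ := x
    obtain ⟨l', j'⟩ := x'
    obtain rfl : l = l' := Fin.ext (Nat.add_right_cancel (h.1.trans h'.1.symm))
    exact congrArg (Sigma.mk l) <| Fin.ext <|
      h.2.symm.right_unique y.2.isLt j.isLt j'.isLt h'.2.symm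
  right_unique {i x y y'} h h' := by
    obtain ⟨l, j⟩ := y
    obtain ⟨l', j'⟩ := y'
    obtain rfl : l = l' := Fin.ext (h.1.symm.trans h'.1)
    exact congrArg (Sigma.mk l) <| Fin.ext <| h.2.right_unique x.2.isLt j.isLt j'.isLt h'.2
  exists_out {x} hx := by
    obtain ⟨l, j⟩ := x
    obtain ⟨m, rfl⟩ := Fin.exists_castSucc_eq.mpr (Fin.val_ne_iff.mp hx.ne)
    obtain ⟨i, hi, k, hk, harrow⟩ := exists_levelArrow (hb m).2 j.isLt
    exact ⟨⟨i, hi⟩, ⟨m.succ, k, hk⟩, rfl, harrow⟩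
  exists_in {y} hy := by
    obtain ⟨l, k⟩ := y
    obtain ⟨m, rfl⟩ := Fin.exists_succ_eq.mpr (Fin.val_ne_iff.mp hy.ne')
    obtain ⟨i, hi, j, hj, harrow⟩ := exists_levelArrow (hb m).1 k.isLt
    exact ⟨⟨i, hi⟩, ⟨m.castSucc, j, hj⟩, rfl, harrow.symm⟩

lemma exists_module_layerings_eq (K : Type u) [Field K] {b : Fin (L + 1) → ℕ}
    (hb : ∀ l : Fin L, b l.succ ≤ r * b l.castSucc ∧ b l.castSucc ≤ r * b l.succ) :
    ∃ (M : Type u) (_ : AddCommGroup M) (_ : Module K M) (_ : Module (TruncAlg K r L) M)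
      (_ : IsScalarTower K (TruncAlg K r L) M) (_ : FiniteDimensional K M),
      radLayering K r L M = b ∧ socLayering K r L M = revTuple L b := by
  obtain ⟨hmodule, htower, hrad, hsoc⟩ := (isLayeredQuiver_levels hb).exists_module K
  have hcard (l : Fin (L + 1)) : Nat.card {x : Σ l, Fin (b l) // (x.1 : ℕ) = l} = b l := by
    simp only [Fin.val_inj]
    rw [Nat.card_congr (Equiv.sigmaSubtype l), Nat.card_eq_fintype_card, Fintype.card_fin]
  exact ⟨(Σ l, Fin (b l)) → K, _, _, hmodule, htower, inferInstance,
    funext fun l => (hrad l).trans (hcard l), funext fun l => (hsoc l).trans (hcard l.rev)⟩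

end Realization

theorem stmt0_general (K : Type u) [Field K] (r L : ℕ) (hr : 2 ≤ r) (d : ℕ) (hd : L + 1 ≤ d)
    (dv : Fin (L + 1) → ℕ) (hsum : ∑ l, dv l = d) :
    (∀ l : Fin L, dv l.succ ≤ r * dv l.castSucc ∧ dv l.castSucc ≤ r * dv l.succ) ↔
      (∃ (M : Type u) (_ : AddCommGroup M) (_ : Module K M)
          (_ : Module (TruncAlg K r L) M) (_ : IsScalarTower K (TruncAlg K r L) M)
          (_ : FiniteDimensional K M),
        radLayering K r L M = dv ∧
        ∀ (N : Type u) (_ : AddCommGroup N) (_ : Module K N)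
            (_ : Module (TruncAlg K r L) N) (_ : IsScalarTower K (TruncAlg K r L) N)
            (_ : FiniteDimensional K N),
          Module.finrank K N = d →
          DomLE L (radLayering K r L N) (radLayering K r L M) →
          DomLE L (socLayering K r L N) (socLayering K r L M) →
          radLayering K r L N = radLayering K r L M ∧
            socLayering K r L N = socLayering K r L M) := by
  constructor
  · intro hdv
    obtain ⟨M, _, _, _, _, _, hrad, hsoc⟩ := exists_module_layerings_eq K hdv
    refine ⟨M, inferInstance, inferInstance, inferInstance, inferInstance, inferInstance, hrad,
      fun N _ _ _ _ _ hN hradN hsocN => ?_⟩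
    rw [hrad] at hradN ⊢
    rw [hsoc] at hsocN ⊢
    exact layerings_eq_of_domLE (hsum.trans hN.symm) hradN hsocN
  · rintro ⟨M, _, _, _, _, _, rfl, hmin⟩
    obtain ⟨b, hb, hsumb, hradb, hsocb⟩ :=
      exists_growth_domLE_layerings (K := K) (M := M) hr (sum_radLayering.symm.trans hsum ▸ hd)
    obtain ⟨N, _, _, _, _, _, hrad, hsoc⟩ := exists_module_layerings_eq K hb
    have hN : Module.finrank K N = d := by
      rw [← sum_radLayering (K := K) (r := r) (L := L), hrad, hsumb, ← hsum, sum_radLayering]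
    have hradN := (hmin N _ _ _ _ inferInstance hN (hrad ▸ hradb) (hsoc ▸ hsocb)).1
    rwa [← hradN, hrad]

/-- For `r ≥ 2` and `d > L+1`, a dimension tuple `(d_0,…,d_L)` summing to `d`
satisfies the inequalities `d_l ≤ r·d_{l-1}` and `d_{l-1} ≤ r·d_l` (for `1 ≤ l ≤ L`) iff it is
the radical layering of some finite-dimensional `Λ`-module `M` for which
`(rad M, socseq M)` is minimal in `rad-soc(d)`. -/
theorem stmt0 (K : Type) [Field K] [IsAlgClosed K] (r L : ℕ) (hr : 2 ≤ r) (hL : 0 < L)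
    (d : ℕ) (hd : L + 1 < d) (dv : Fin (L + 1) → ℕ) (hsum : ∑ l, dv l = d) :
    (∀ l : Fin L, dv l.succ ≤ r * dv l.castSucc ∧ dv l.castSucc ≤ r * dv l.succ) ↔
      (∃ (M : Type) (_ : AddCommGroup M) (_ : Module K M)
          (_ : Module (TruncAlg K r L) M) (_ : IsScalarTower K (TruncAlg K r L) M)
          (_ : FiniteDimensional K M),
        radLayering K r L M = dv ∧
        ∀ (N : Type) (_ : AddCommGroup N) (_ : Module K N)
            (_ : Module (TruncAlg K r L) N) (_ : IsScalarTower K (TruncAlg K r L) N)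
            (_ : FiniteDimensional K N),
          Module.finrank K N = d →
          DomLE L (radLayering K r L N) (radLayering K r L M) →
          DomLE L (socLayering K r L N) (socLayering K r L M) →
          radLayering K r L N = radLayering K r L M ∧
            socLayering K r L N = socLayering K r L M) :=
  stmt0_general K r L hr d hd.le dv hsum
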